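/- If ⊢_AF2 T : ∀x{N^g[x] → ¬¬N[x]}, then for every n ∈ ℕ there is a λ-term τₙ ≃β n̲ such that for every classical integer θₙ of value n (i.e. every closed λC-term with ⊢_C2 θₙ : N[sⁿ0]), there is a substitution σ such that (T)θₙ f ≻_C (f)σ(τₙ), and consequently (T)θₙ λx x ≻_C σ′(τₙ) →β n̲. -/

import Mathlib

/- Pure untyped λ-calculus with de Bruijn indices. -/

inductive Lam : Type
  | var : ℕ → Lam
  | app : Lam → Lam → Lam
  | abs : Lam → Lam
  deriving DecidableEq

namespace Lam

/-- Renaming of free variables. -/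
def rename (ρ : ℕ → ℕ) : Lam → Lam
  | var i => var (ρ i)
  | app u v => app (u.rename ρ) (v.rename ρ)
  | abs u => abs (u.rename (fun i => match i with | 0 => 0 | j+1 => ρ j + 1))

/-- Lifting of a simultaneous substitution under a binder. -/
def liftSub (σ : ℕ → Lam) : ℕ → Lam
  | 0 => var 0
  | i+1 => (σ i).rename (· + 1)

/-- Simultaneous (capture-avoiding) substitution of the free variables. -/
def subst (σ : ℕ → Lam) : Lam → Lam
  | var i => σ i
  | app u v => app (u.subst σ) (v.subst σ)
  | abs u => abs (u.subst (liftSub σ))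

/-- `u.subst0 v` is `u[v/x]` for the first variable. -/
def subst0 (u v : Lam) : Lam :=
  u.subst (fun i => match i with | 0 => v | j+1 => var j)

/-- One step of β-reduction (anywhere in the term). -/
inductive Beta : Lam → Lam → Prop
  | beta (u v : Lam) : Beta (app (abs u) v) (u.subst0 v)
  | appL {u u'} (v) : Beta u u' → Beta (app u v) (app u' v)
  | appR (u) {v v'} : Beta v v' → Beta (app u v) (app u v')
  | abs {u u'} : Beta u u' → Beta (abs u) (abs u')

/-- β-equivalence `≃β`. -/
def BetaEq : Lam → Lam → Prop := Relation.EqvGen Beta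

/-- A term is normal if it has no β-redex. -/
def Normal (t : Lam) : Prop := ∀ u, ¬ Beta t u

def IsAbs : Lam → Prop
  | abs _ => True
  | _ => False

/-- One step of head reduction: reduction of the head redex. -/
inductive HeadStep : Lam → Lam → Prop
  | beta (u v) : HeadStep (app (abs u) v) (u.subst0 v)
  | appL {u u'} (v) : ¬ u.IsAbs → HeadStep u u' → HeadStep (app u v) (app u' v)
  | abs {u u'} : HeadStep u u' → HeadStep (abs u) (abs u')

/-- `HeadRedN n u v` : `u` head-reduces to `v` in exactly `n` steps (`u ≻ v` with `n(u,v) = n`). -/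
inductive HeadRedN : ℕ → Lam → Lam → Prop
  | refl (u) : HeadRedN 0 u u
  | step {n u v w} : HeadStep u v → HeadRedN n v w → HeadRedN (n+1) u w

/-- `u ≻ v` : `v` is obtained from `u` by some head reductions. -/
def HeadRed (u v : Lam) : Prop := ∃ n, HeadRedN n u v

/-- Head normal form. -/
def HeadNF (t : Lam) : Prop := ∀ u, ¬ HeadStep t u

def ClosedUnder : ℕ → Lam → Prop
  | k, var i => i < k
  | k, app u v => ClosedUnder k u ∧ ClosedUnder k v
  | k, abs u => ClosedUnder (k+1) u

/-- Closed λ-term. -/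
def Closed (t : Lam) : Prop := ClosedUnder 0 t

/-- `(f)ⁿx` : `iterApp f n x = (f)(f)…(f)x`. -/
def iterApp (f : Lam) : ℕ → Lam → Lam
  | 0, x => x
  | n+1, x => app f (iterApp f n x)

/-- The Church integer `n̲ = λxλf(f)ⁿx`. -/
def church (n : ℕ) : Lam := abs (abs (iterApp (var 0) n (var 1)))

/-- `(t)w₁…wₖ`. -/
def appList (t : Lam) (ws : List Lam) : Lam := ws.foldl app t

/-- `T` is a storage operator for the closed normal term `t` :
there is `τ ≃β t` such that for every `θ ≃β t` there is a substitution `σ`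
(not touching the fresh variable `f`, represented by the de Bruijn index `0`)
with `(T)θf ≻ (f)σ(τ)`. -/
def IsStorageFor (T t : Lam) : Prop :=
  Closed T ∧ ∃ τ, BetaEq τ t ∧ ∀ θ, BetaEq θ t →
    ∃ σ : ℕ → Lam, σ 0 = var 0 ∧
      HeadRed (app (app T θ) (var 0)) (app (var 0) (τ.subst σ))

end Lam

/- Second order predicate logic : the types of the AF2 type system. -/

/-- A first order language: function symbols with arities, and predicate symbols. -/
structure Sig where
  Fn : Type
  arFn : Fn → ℕ
  Pr : Type

/-- First order terms over `S` (de Bruijn indices for first order variables). -/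
inductive FOTerm (S : Sig) : Type
  | var : ℕ → FOTerm S
  | fn : (f : S.Fn) → (Fin (S.arFn f) → FOTerm S) → FOTerm S

namespace FOTerm

variable {S : Sig}

def rename (ρ : ℕ → ℕ) : FOTerm S → FOTerm S
  | var i => var (ρ i)
  | fn f ts => fn f (fun i => (ts i).rename ρ)

def liftSub (σ : ℕ → FOTerm S) : ℕ → FOTerm S
  | 0 => var 0
  | i+1 => (σ i).rename (· + 1)

/-- Simultaneous substitution on first order terms. -/
def subst (σ : ℕ → FOTerm S) : FOTerm S → FOTerm S
  | var i => σ i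
  | fn f ts => fn f (fun i => (ts i).subst σ)

end FOTerm


/-- Formulas of second order predicate logic over `S` : `⊥`, atomic formulas
`P(t₁,…,tₙ)` (predicate symbol) and `X(t₁,…,tₙ)` (predicate variable, de Bruijn),
implication, first order and second order universal quantification. -/
inductive Form (S : Sig) : Type
  | bot : Form S
  | pr : S.Pr → List (FOTerm S) → Form S
  | pvar : ℕ → List (FOTerm S) → Form S
  | arr : Form S → Form S → Form S
  | fall : Form S → Form S
  | pall : Form S → Form S

namespace Form

variable {S : Sig}

/-- `¬A = A → ⊥`. -/
def neg (A : Form S) : Form S := arr A bot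

/-- Substitution of first order terms for the first order variables of a formula. -/
def substFO (σ : ℕ → FOTerm S) : Form S → Form S
  | bot => bot
  | pr P ts => pr P (ts.map (FOTerm.subst σ))
  | pvar X ts => pvar X (ts.map (FOTerm.subst σ))
  | arr A B => arr (A.substFO σ) (B.substFO σ)
  | fall A => fall (A.substFO (FOTerm.liftSub σ))
  | pall A => pall (A.substFO σ)

/-- `A[u/x]` for the first first-order variable. -/
def substFO0 (A : Form S) (u : FOTerm S) : Form S :=
  A.substFO (fun i => match i with | 0 => u | j+1 => FOTerm.var j)

/-- Lifting of the free first order variables (used for the rule (4)). -/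
def shiftFO (A : Form S) : Form S := A.substFO (fun i => FOTerm.var (i+1))

/-- Renaming of the free predicate variables. -/
def rename2 (ρ : ℕ → ℕ) : Form S → Form S
  | bot => bot
  | pr P ts => pr P ts
  | pvar X ts => pvar (ρ X) ts
  | arr A B => arr (A.rename2 ρ) (B.rename2 ρ)
  | fall A => fall (A.rename2 ρ)
  | pall A => pall (A.rename2 (fun i => match i with | 0 => 0 | j+1 => ρ j + 1))

/-- `inst2 G d e A` : substitution `A[G/X]` of the formula `G` (whose first order
variables `0,…,k-1` are the parameters of the predicate variable `X`) for the
predicate variable `X` of de Bruijn index `e`, where `d` first order binders have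
been crossed. Each atomic subformula `X(t₁,…,tₖ)` is replaced by `G[t₁/x₁,…,tₖ/xₖ]`. -/
def inst2 (G : Form S) : ℕ → ℕ → Form S → Form S
  | _, _, bot => bot
  | _, _, pr P ts => pr P ts
  | d, e, pvar X ts =>
      if X = e then
        (G.rename2 (· + e)).substFO (fun i =>
          if h : i < ts.length then ts.get ⟨i, h⟩ else FOTerm.var (i - ts.length + d))
      else pvar (if e < X then X - 1 else X) ts
  | d, e, arr A B => arr (inst2 G d e A) (inst2 G d e B)
  | d, e, fall A => fall (inst2 G (d+1) e A)
  | d, e, pall A => pall (inst2 G d (e+1) A)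

/-- `A[G/X]` for the first predicate variable. -/
def inst2_0 (A G : Form S) : Form S := inst2 G 0 0 A

end Form

/-- Axioms of the equational theory: substitution instances of the equations of `E`. -/
def EqAx {S : Sig} (E : Set (FOTerm S × FOTerm S)) (u v : FOTerm S) : Prop :=
  ∃ p ∈ E, ∃ σ : ℕ → FOTerm S, u = p.1.subst σ ∧ v = p.2.subst σ

/-- `u ≈ v` : the equivalence relation generated by the substitution instances
of the equations of `E`. -/
def EqE {S : Sig} (E : Set (FOTerm S × FOTerm S)) : FOTerm S → FOTerm S → Prop :=
  Relation.EqvGen (EqAx E)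

/-- The AF2 type system: `AF2 S E Γ t A` means `Γ ⊢_{AF2} t : A`
with respect to the set of equations `E` (de Bruijn presentation: the rules
(4) and (6) of ∀-introduction lift the context, which implements the side
condition that the quantified variable does not occur free in `Γ`). -/
inductive AF2 (S : Sig) (E : Set (FOTerm S × FOTerm S)) :
    List (Form S) → Lam → Form S → Prop
  | var {Γ : List (Form S)} {i : ℕ} {A : Form S} :
      Γ[i]? = some A → AF2 S E Γ (.var i) A
  | absI {Γ : List (Form S)} {A B : Form S} {t : Lam} :
      AF2 S E (A :: Γ) t B → AF2 S E Γ (.abs t) (.arr A B)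
  | appE {Γ : List (Form S)} {A B : Form S} {u v : Lam} :
      AF2 S E Γ u (.arr A B) → AF2 S E Γ v A → AF2 S E Γ (.app u v) B
  | fallI {Γ : List (Form S)} {t : Lam} {A : Form S} :
      AF2 S E (Γ.map Form.shiftFO) t A → AF2 S E Γ t (.fall A)
  | fallE {Γ : List (Form S)} {t : Lam} {A : Form S} (u : FOTerm S) :
      AF2 S E Γ t (.fall A) → AF2 S E Γ t (A.substFO0 u)
  | pallI {Γ : List (Form S)} {t : Lam} {A : Form S} :
      AF2 S E (Γ.map (Form.rename2 (· + 1))) t A → AF2 S E Γ t (.pall A)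
  | pallE {Γ : List (Form S)} {t : Lam} {A : Form S} (G : Form S) :
      AF2 S E Γ t (.pall A) → AF2 S E Γ t (A.inst2_0 G)
  | eqE {Γ : List (Form S)} {t : Lam} {A : Form S} {u v : FOTerm S} :
      AF2 S E Γ t (A.substFO0 u) → EqE E u v → AF2 S E Γ t (A.substFO0 v)

/- The language of arithmetic: a constant 0 and a unary function symbol s. -/

inductive NatFn : Type
  | zero : NatFn
  | succ : NatFn

/-- The signature with a constant symbol `0` and a unary function symbol `s`. -/
def NatSig : Sig where
  Fn := NatFn
  arFn := fun f => match f with | .zero => 0 | .succ => 1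
  Pr := Empty

/-- The first order term `0`. -/
def zeroT : FOTerm NatSig := .fn NatFn.zero (fun i => i.elim0)

/-- The first order term `s(u)`. -/
def succT (u : FOTerm NatSig) : FOTerm NatSig := .fn NatFn.succ (fun _ => u)

/-- The first order term `sⁿ(0)`. -/
def numT : ℕ → FOTerm NatSig
  | 0 => zeroT
  | n+1 => succT (numT n)

/-- A set of equations is adequate with the type of integers iff
`s(a) ≉ 0` and `s(a) ≈ s(b)` implies `a ≈ b`. -/
def Adequate (E : Set (FOTerm NatSig × FOTerm NatSig)) : Prop :=
  (∀ a, ¬ EqE E (succT a) zeroT) ∧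
  (∀ a b, EqE E (succT a) (succT b) → EqE E a b)

/-- The type of integers `N[u] = ∀X{X(0), ∀y(X(y) → X(sy)) → X(u)}`. -/
def NForm (u : FOTerm NatSig) : Form NatSig :=
  .pall (.arr (.pvar 0 [zeroT])
    (.arr (.fall (.arr (.pvar 0 [FOTerm.var 0]) (.pvar 0 [succT (FOTerm.var 0)])))
      (.pvar 0 [u])))

/-- The Gödel translation `F^g`, obtained by putting `¬` in front of
each atomic subformula of `F`. -/
def Form.godel {S : Sig} : Form S → Form S
  | .bot => .neg .bot
  | .pr P ts => .neg (.pr P ts)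
  | .pvar X ts => .neg (.pvar X ts)
  | .arr A B => .arr A.godel B.godel
  | .fall A => .fall A.godel
  | .pall A => .pall A.godel

/-- The type `∀x{N^g[x] → ¬¬N[x]}` of storage operators. -/
def storType : Form NatSig :=
  .fall (.arr (NForm (FOTerm.var 0)).godel (.neg (.neg (NForm (FOTerm.var 0)))))

/- The λC-calculus : λ-calculus with an extra constant C. -/

inductive LC : Type
  | var : ℕ → LC
  | app : LC → LC → LC
  | abs : LC → LC
  | cc : LC

namespace LC

def rename (ρ : ℕ → ℕ) : LC → LC
  | var i => var (ρ i)
  | app u v => app (u.rename ρ) (v.rename ρ)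
  | abs u => abs (u.rename (fun i => match i with | 0 => 0 | j+1 => ρ j + 1))
  | cc => cc

def liftSub (σ : ℕ → LC) : ℕ → LC
  | 0 => var 0
  | i+1 => (σ i).rename (· + 1)

def subst (σ : ℕ → LC) : LC → LC
  | var i => σ i
  | app u v => app (u.subst σ) (v.subst σ)
  | abs u => abs (u.subst (liftSub σ))
  | cc => cc

def subst0 (u v : LC) : LC :=
  u.subst (fun i => match i with | 0 => v | j+1 => var j)

/-- One step of β-reduction on λC-terms. -/
inductive Beta : LC → LC → Prop
  | beta (u v : LC) : Beta (app (abs u) v) (u.subst0 v)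
  | appL {u u'} (v) : Beta u u' → Beta (app u v) (app u' v)
  | appR (u) {v v'} : Beta v v' → Beta (app u v) (app u v')
  | abs {u u'} : Beta u u' → Beta (abs u) (abs u')

/-- β-equivalence on λC-terms. -/
def BetaEq : LC → LC → Prop := Relation.EqvGen Beta

def ClosedUnder : ℕ → LC → Prop
  | k, var i => i < k
  | k, app u v => ClosedUnder k u ∧ ClosedUnder k v
  | k, abs u => ClosedUnder (k+1) u
  | _, cc => True

def Closed (t : LC) : Prop := ClosedUnder 0 t

/-- Pure λ-terms : the constant `C` does not occur. -/
def Pure : LC → Prop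
  | var _ => True
  | app u v => Pure u ∧ Pure v
  | abs u => Pure u
  | cc => False

def iterApp (f : LC) : ℕ → LC → LC
  | 0, x => x
  | n+1, x => app f (iterApp f n x)

/-- The Church integer `n̲ = λxλf(f)ⁿx` as a λC-term. -/
def church (n : ℕ) : LC := abs (abs (iterApp (var 0) n (var 1)))

/-- `(t)t₁…tₙ`. -/
def appSpine (t : LC) (ts : List LC) : LC := ts.foldl app t

/-- One step of head C-reduction :
`(λx u)t t₁…tₙ → (u[t/x])t₁…tₙ` and `(C)t t₁…tₙ → (t)λx(x)t₁…tₙ`. -/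
inductive HCStep : LC → LC → Prop
  | beta (u t : LC) (ts : List LC) :
      HCStep (appSpine (app (abs u) t) ts) (appSpine (u.subst0 t) ts)
  | cred (t : LC) (ts : List LC) :
      HCStep (appSpine (app cc t) ts)
        (app t (abs (appSpine (var 0) (ts.map (rename (· + 1))))))

/-- `u ≻_C v`. -/
def HCRed : LC → LC → Prop := Relation.ReflTransGen HCStep

end LC

/-- The type systems AF2 (`cl = false`) and C2 (`cl = true`) over λC-terms :
C2 is obtained from AF2 by adding the axiom `C : ∀X{¬¬X → X}`. -/
inductive TypC (S : Sig) (E : Set (FOTerm S × FOTerm S)) (cl : Bool) :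
    List (Form S) → LC → Form S → Prop
  | ccAx {Γ : List (Form S)} : cl = true →
      TypC S E cl Γ .cc
        (.pall (.arr (.arr (.arr (.pvar 0 []) .bot) .bot) (.pvar 0 [])))
  | var {Γ : List (Form S)} {i : ℕ} {A : Form S} :
      Γ[i]? = some A → TypC S E cl Γ (.var i) A
  | absI {Γ : List (Form S)} {A B : Form S} {t : LC} :
      TypC S E cl (A :: Γ) t B → TypC S E cl Γ (.abs t) (.arr A B)
  | appE {Γ : List (Form S)} {A B : Form S} {u v : LC} :
      TypC S E cl Γ u (.arr A B) → TypC S E cl Γ v A → TypC S E cl Γ (.app u v) B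
  | fallI {Γ : List (Form S)} {t : LC} {A : Form S} :
      TypC S E cl (Γ.map Form.shiftFO) t A → TypC S E cl Γ t (.fall A)
  | fallE {Γ : List (Form S)} {t : LC} {A : Form S} (u : FOTerm S) :
      TypC S E cl Γ t (.fall A) → TypC S E cl Γ t (A.substFO0 u)
  | pallI {Γ : List (Form S)} {t : LC} {A : Form S} :
      TypC S E cl (Γ.map (Form.rename2 (· + 1))) t A → TypC S E cl Γ t (.pall A)
  | pallE {Γ : List (Form S)} {t : LC} {A : Form S} (G : Form S) :
      TypC S E cl Γ t (.pall A) → TypC S E cl Γ t (A.inst2_0 G)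
  | eqE {Γ : List (Form S)} {t : LC} {A : Form S} {u v : FOTerm S} :
      TypC S E cl Γ t (A.substFO0 u) → EqE E u v → TypC S E cl Γ t (A.substFO0 v)

/-! The argument runs `T` symbolically on a variable `ν` standing for the unknown integer. In a
Kripke model over the iterations opened so far, the type of `T` forces `T ν f` to converge to `f τ`
where `τ` reduces to `n̲`: whenever the run reaches `ν a b c` it pretends that `ν` is `n̲` and
unrolls `(n̲) a b c`, each recursive call being recorded as a new variable in a trace.

Conversely, an arbitrary classical integer `θ` realizes `N[n]` in every Krivine model. Taking as
falsity values of the predicate variable the arguments on which the symbolic run goes through,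
`θ a b c` is seen to follow the run, by induction on the length of the part of the run still to be
simulated. So `(T)θ f` reduces to an instance of `(f)τ`, with `τ` independent of `θ`. -/

/-- Extension of a sequence by a new first entry. It serves for the substitutions, renamings and
environments indexed by de Bruijn indices. -/
def scons {α : Type*} (a : α) (f : ℕ → α) : ℕ → α
  | 0 => a
  | i + 1 => f i

/-! ### Reduction of λC-terms -/

namespace LC

variable {k n : ℕ} {t u v : LC}

theorem rename_abs (ρ : ℕ → ℕ) (u : LC) :
    (abs u).rename ρ = abs (u.rename (scons 0 fun i => ρ i + 1)) := rfl

theorem subst0_eq_subst (u v : LC) : u.subst0 v = u.subst (scons v var) := rfl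

theorem rename_rename (t : LC) (ρ ρ' : ℕ → ℕ) :
    (t.rename ρ).rename ρ' = t.rename fun i => ρ' (ρ i) := by
  induction t generalizing ρ ρ' with
  | var i => rfl
  | app u v ihu ihv => simp only [rename, ihu, ihv]
  | abs u ih =>
    simp only [rename_abs, ih]
    congr 2
    funext i
    cases i <;> rfl
  | cc => rfl

theorem rename_subst (t : LC) (ρ : ℕ → ℕ) (σ : ℕ → LC) :
    (t.rename ρ).subst σ = t.subst fun i => σ (ρ i) := by
  induction t generalizing ρ σ with
  | var i => rfl
  | app u v ihu ihv => simp only [rename, subst, ihu, ihv]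
  | abs u ih =>
    simp only [rename_abs, subst, ih]
    congr 2
    funext i
    cases i <;> rfl
  | cc => rfl

theorem subst_rename (t : LC) (σ : ℕ → LC) (ρ : ℕ → ℕ) :
    (t.subst σ).rename ρ = t.subst fun i => (σ i).rename ρ := by
  induction t generalizing σ ρ with
  | var i => rfl
  | app u v ihu ihv => simp only [rename, subst, ihu, ihv]
  | abs u ih =>
    simp only [subst, rename_abs, ih]
    congr 2
    funext i
    cases i with
    | zero => rfl
    | succ j => simp only [liftSub, rename_rename, scons]
  | cc => rfl

theorem subst_subst (t : LC) (σ σ' : ℕ → LC) :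
    (t.subst σ).subst σ' = t.subst fun i => (σ i).subst σ' := by
  induction t generalizing σ σ' with
  | var i => rfl
  | app u v ihu ihv => simp only [subst, ihu, ihv]
  | abs u ih =>
    simp only [subst, ih]
    congr 2
    funext i
    cases i with
    | zero => rfl
    | succ j => simp only [liftSub, rename_subst, subst_rename]
  | cc => rfl

theorem subst_var (t : LC) : t.subst var = t := by
  have liftSub_var : liftSub var = var := by
    funext i
    cases i <;> rfl
  induction t with
  | var i => rfl
  | app u v ihu ihv => simp only [subst, ihu, ihv]
  | abs u ih => simp only [subst, liftSub_var, ih]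
  | cc => rfl

theorem subst_congr {σ σ' : ℕ → LC} (ht : ClosedUnder k t) (h : ∀ i < k, σ i = σ' i) :
    t.subst σ = t.subst σ' := by
  induction t generalizing k σ σ' with
  | var i => exact h i ht
  | app u v ihu ihv => simp only [subst, ihu ht.1 h, ihv ht.2 h]
  | abs u ih =>
    refine congrArg abs (ih ht fun i hi => ?_)
    cases i with
    | zero => rfl
    | succ j => simp only [liftSub, h j (Nat.lt_of_succ_lt_succ hi)]
  | cc => rfl

theorem subst_of_closed (ht : Closed t) (σ : ℕ → LC) : t.subst σ = t :=
  (subst_congr ht fun _ hi => absurd hi (Nat.not_lt_zero _)).trans (subst_var t)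

theorem rename_eq_subst (t : LC) (ρ : ℕ → ℕ) : t.rename ρ = t.subst fun i => var (ρ i) := by
  simpa only [subst_var, rename] using subst_rename t var ρ

theorem liftSub_subst0 (u v : LC) (σ : ℕ → LC) :
    (u.subst (liftSub σ)).subst0 v = u.subst (scons v σ) := by
  rw [subst0_eq_subst, subst_subst]
  congr 1
  funext i
  cases i with
  | zero => rfl
  | succ j => exact (rename_subst _ _ _).trans (subst_var _)

theorem subst0_subst (u v : LC) (σ : ℕ → LC) :
    (u.subst0 v).subst σ = (u.subst (liftSub σ)).subst0 (v.subst σ) := by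
  rw [liftSub_subst0, subst0_eq_subst, subst_subst]
  congr 1
  funext i
  cases i <;> rfl

theorem appSpine_subst (t : LC) (ts : List LC) (σ : ℕ → LC) :
    (appSpine t ts).subst σ = appSpine (t.subst σ) (ts.map (subst σ)) := by
  induction ts generalizing t with
  | nil => rfl
  | cons a _ ih => exact ih (app t a)

theorem HCStep.subst (h : HCStep u v) (σ : ℕ → LC) : HCStep (u.subst σ) (v.subst σ) := by
  cases h with
  | beta u t ts =>
    rw [appSpine_subst, appSpine_subst, subst0_subst]
    exact .beta _ _ _
  | cred t ts =>
    have map_comm : (ts.map (rename (· + 1))).map (LC.subst (liftSub σ)) =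
        (ts.map (LC.subst σ)).map (rename (· + 1)) := by
      simp only [List.map_map, List.map_inj_left, Function.comp, rename_subst, subst_rename,
        liftSub, implies_true]
    simpa only [LC.subst, appSpine_subst, map_comm, liftSub] using
      HCStep.cred (t.subst σ) (ts.map (LC.subst σ))

theorem HCRed.subst (h : HCRed u v) (σ : ℕ → LC) : HCRed (u.subst σ) (v.subst σ) :=
  h.lift _ fun _ _ h => h.subst σ

theorem Beta.subst (h : Beta u v) (σ : ℕ → LC) : Beta (u.subst σ) (v.subst σ) := by
  induction h generalizing σ with
  | beta u v => rw [subst0_subst]; exact .beta _ _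
  | appL v _ ih => exact .appL _ (ih σ)
  | appR u _ ih => exact .appR _ (ih σ)
  | abs _ ih => exact .abs (ih _)

/-- Reduction `→β`: finitely many steps of β-reduction. -/
abbrev BetaRed : LC → LC → Prop := Relation.ReflTransGen Beta

namespace BetaRed

theorem subst (h : BetaRed u v) (σ : ℕ → LC) : BetaRed (u.subst σ) (v.subst σ) :=
  h.lift _ fun _ _ h => h.subst σ

theorem rename (h : BetaRed u v) (ρ : ℕ → ℕ) : BetaRed (u.rename ρ) (v.rename ρ) := by
  simpa only [rename_eq_subst] using h.subst fun i => var (ρ i)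

theorem abs (h : BetaRed u v) : BetaRed (abs u) (abs v) :=
  h.lift _ fun _ _ h => h.abs

theorem appR (t : LC) (h : BetaRed u v) : BetaRed (app t u) (app t v) :=
  h.lift _ fun _ _ h => h.appR t

theorem betaEq (h : BetaRed u v) : BetaEq u v := by
  induction h with
  | refl => exact .refl _
  | tail _ h ih => exact .trans _ _ _ ih (.rel _ _ h)

end BetaRed

/-- Weak head β-reduction: contraction of the redex in head position, not under abstractions. -/
inductive HeadBeta : LC → LC → Prop
  | beta (u v : LC) : HeadBeta (app (abs u) v) (u.subst0 v)
  | appL {u u' : LC} (v : LC) : HeadBeta u u' → HeadBeta (app u v) (app u' v)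

theorem HeadBeta.toBeta (h : HeadBeta u v) : Beta u v := by
  induction h with
  | beta u v => exact .beta u v
  | appL v _ ih => exact .appL v ih

theorem HeadBeta.hcStep_appSpine (h : HeadBeta u v) (ts : List LC) :
    HCStep (appSpine u ts) (appSpine v ts) := by
  induction h generalizing ts with
  | beta u v => exact .beta u v ts
  | appL v _ ih => exact ih (v :: ts)

/-- Pure λ-terms whose free variables are among the first `k`. -/
def PureUnder : ℕ → LC → Prop
  | k, var i => i < k
  | k, app u v => PureUnder k u ∧ PureUnder k v
  | k, abs u => PureUnder (k + 1) u
  | _, cc => False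

namespace PureUnder

theorem pure (h : PureUnder k t) : Pure t := by
  induction t generalizing k with
  | var i => trivial
  | app u v ihu ihv => exact ⟨ihu h.1, ihv h.2⟩
  | abs u ih => exact ih h
  | cc => exact h

theorem closedUnder (h : PureUnder k t) : ClosedUnder k t := by
  induction t generalizing k with
  | var i => exact h
  | app u v ihu ihv => exact ⟨ihu h.1, ihv h.2⟩
  | abs u ih => exact ih h
  | cc => trivial

theorem rename {l : ℕ} {ρ : ℕ → ℕ} (ht : PureUnder k t) (hρ : ∀ i < k, ρ i < l) :
    PureUnder l (t.rename ρ) := by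
  induction t generalizing k l ρ with
  | var i => exact hρ i ht
  | app u v ihu ihv => exact ⟨ihu ht.1 hρ, ihv ht.2 hρ⟩
  | abs u ih =>
    refine ih ht fun i hi => ?_
    cases i with
    | zero => exact Nat.succ_pos l
    | succ j => exact Nat.succ_lt_succ (hρ j (Nat.lt_of_succ_lt_succ hi))
  | cc => exact ht

theorem subst {l : ℕ} {σ : ℕ → LC} (ht : PureUnder k t) (hσ : ∀ i < k, PureUnder l (σ i)) :
    PureUnder l (t.subst σ) := by
  induction t generalizing k l σ with
  | var i => exact hσ i ht
  | app u v ihu ihv => exact ⟨ihu ht.1 hσ, ihv ht.2 hσ⟩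
  | abs u ih =>
    refine ih ht fun i hi => ?_
    cases i with
    | zero => exact Nat.succ_pos l
    | succ j =>
      exact (hσ j (Nat.lt_of_succ_lt_succ hi)).rename fun i hi => Nat.succ_lt_succ hi
  | cc => exact ht

theorem mono {l : ℕ} (hkl : k ≤ l) (ht : PureUnder k t) : PureUnder l t := by
  simpa only [subst_var] using ht.subst (σ := var) fun i hi => hi.trans_le hkl

theorem beta (h : Beta u v) (hu : PureUnder k u) : PureUnder k v := by
  induction h generalizing k with
  | beta u v =>
    rw [subst0_eq_subst]
    refine PureUnder.subst hu.1 fun i hi => ?_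
    cases i with
    | zero => exact hu.2
    | succ j => exact Nat.lt_of_succ_lt_succ hi
  | appL v _ ih => exact ⟨ih hu.1, hu.2⟩
  | appR u _ ih => exact ⟨hu.1, ih hu.2⟩
  | abs _ ih => exact ih hu

end PureUnder

/-- The renaming that turns the free variable `k` into the variable bound by a new
abstraction. -/
def closeVar (k : ℕ) : ℕ → ℕ := fun i => if i = k then 0 else i + 1

theorem subst0_var_rename_closeVar (hu : PureUnder (k + 1) u) :
    (u.subst0 (var k)).rename (closeVar k) = u := by
  rw [subst0_eq_subst, subst_rename]
  refine (subst_congr hu.closedUnder fun i hi => ?_).trans (subst_var u)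
  cases i with
  | zero => simp only [scons, rename, closeVar, if_true]
  | succ j =>
    have j_ne_k : j ≠ k := (Nat.lt_of_succ_lt_succ hi).ne
    simp only [scons, rename, closeVar, j_ne_k, if_false]

theorem BetaRed.of_app_var (ht : PureUnder k t) (h : BetaRed (app t (var k)) u) :
    (∃ t', PureUnder k t' ∧ u = app t' (var k)) ∨
      BetaRed t (LC.abs (u.rename (closeVar k))) := by
  suffices (∃ t', BetaRed t t' ∧ PureUnder k t' ∧ u = app t' (var k)) ∨
      BetaRed t (LC.abs (u.rename (closeVar k))) from
    this.imp_left fun ⟨t', _, ht', hu⟩ => ⟨t', ht', hu⟩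
  induction h with
  | refl => exact .inl ⟨t, .refl, ht, rfl⟩
  | tail _ step ih =>
    rcases ih with ⟨t', red, ht', rfl⟩ | red
    · cases step with
      | beta u v => exact .inr ((subst0_var_rename_closeVar ht').symm ▸ red)
      | appL v step => exact .inl ⟨_, red.tail step, ht'.beta step, rfl⟩
      | appR u step => cases step
    · exact .inr (red.trans (BetaRed.rename (.single step) _).abs)

theorem rename_iterApp (ρ : ℕ → ℕ) (f x : LC) (n : ℕ) :
    (iterApp f n x).rename ρ = iterApp (f.rename ρ) n (x.rename ρ) := by
  induction n with
  | zero => rfl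
  | succ n ih => simp only [iterApp, rename, ih]

theorem iterApp_var_ne_app_var {i j l : ℕ} (hjl : j ≠ l) (t : LC) :
    iterApp (var i) n (var j) ≠ app t (var l) := by
  rcases n with _ | _ | n <;> simp [iterApp, hjl]

/-- A pure term that iterates fresh variables `n` times reduces to `n̲`: since the iterate is not
an application to the fresh variable, the last reduction must have gone through an abstraction. -/
theorem BetaRed.church_of_iterApp (ht : PureUnder k t)
    (h : BetaRed (app (app t (var k)) (var (k + 1))) (iterApp (var (k + 1)) n (var k))) :
    BetaRed t (church n) := by
  have ht₁ : PureUnder (k + 1) (app t (var k)) := ⟨ht.mono k.le_succ, k.lt_succ_self⟩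
  rcases h.of_app_var ht₁ with ⟨_, _, eq⟩ | h₁
  · exact absurd eq (iterApp_var_ne_app_var k.lt_succ_self.ne _)
  rcases h₁.of_app_var ht with ⟨_, _, eq⟩ | h₂
  · exact absurd eq LC.noConfusion
  · simpa [rename_abs, rename_iterApp, LC.rename, closeVar, scons, church] using h₂

theorem church_closed (n : ℕ) : Closed (church n) := by
  change ClosedUnder 2 (iterApp (var 0) n (var 1))
  induction n with
  | zero => exact Nat.one_lt_two
  | succ n ih => exact ⟨Nat.two_pos, ih⟩

end LC

theorem TypC.pureUnder {S : Sig} {E : Set (FOTerm S × FOTerm S)} {Γ : List (Form S)} {t : LC}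
    {A : Form S} (h : TypC S E false Γ t A) : t.PureUnder Γ.length := by
  induction h with
  | ccAx h => cases h
  | var h => exact (List.getElem?_eq_some_iff.mp h).1
  | absI _ ih => exact ih
  | appE _ _ ihu ihv => exact ⟨ihu, ihv⟩
  | fallI _ ih | pallI _ ih => simpa only [List.length_map] using ih
  | fallE _ _ ih | pallE _ _ ih | eqE _ _ ih => exact ih

/-! ### First-order semantics -/

section FirstOrder

variable {S : Sig} {D : Type}

/-- Value of a first-order term, for an interpretation `fn` of the function symbols and values `e`
of the variables. -/
def FOTerm.eval (fn : (f : S.Fn) → (Fin (S.arFn f) → D) → D) (e : ℕ → D) : FOTerm S → D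
  | var i => e i
  | .fn f ts => fn f fun i => (ts i).eval fn e

variable {fn : (f : S.Fn) → (Fin (S.arFn f) → D) → D}

theorem FOTerm.eval_rename (e : ℕ → D) (ρ : ℕ → ℕ) (t : FOTerm S) :
    (t.rename ρ).eval fn e = t.eval fn fun i => e (ρ i) := by
  induction t with
  | var i => rfl
  | fn f ts ih => simp only [rename, eval, ih]

theorem FOTerm.eval_subst (e : ℕ → D) (σ : ℕ → FOTerm S) (t : FOTerm S) :
    (t.subst σ).eval fn e = t.eval fn fun i => (σ i).eval fn e := by
  induction t with
  | var i => rfl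
  | fn f ts ih => simp only [subst, eval, ih]

/-- Validity of the equations of `E` in the structure given by `fn`. -/
def Satisfies (fn : (f : S.Fn) → (Fin (S.arFn f) → D) → D) (E : Set (FOTerm S × FOTerm S)) :
    Prop :=
  ∀ p ∈ E, ∀ e, p.1.eval fn e = p.2.eval fn e

theorem Satisfies.eval_eq {E : Set (FOTerm S × FOTerm S)} (hE : Satisfies fn E) {u v : FOTerm S}
    (h : EqE E u v) (e : ℕ → D) : u.eval fn e = v.eval fn e := by
  induction h with
  | rel u v h =>
    obtain ⟨p, hp, σ, rfl, rfl⟩ := h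
    rw [FOTerm.eval_subst, FOTerm.eval_subst, hE p hp]
  | refl => rfl
  | symm _ _ _ ih => exact ih.symm
  | trans _ _ _ _ _ ih₁ ih₂ => exact ih₁.trans ih₂

end FirstOrder

/-- The standard interpretation in `ℕ` of the symbols `0` and `s`. -/
def natFn : (f : NatFn) → (Fin (NatSig.arFn f) → ℕ) → ℕ
  | .zero, _ => 0
  | .succ, v => v ⟨0, Nat.one_pos⟩ + 1

theorem eval_numT (n : ℕ) (e : ℕ → ℕ) : (numT n).eval natFn e = n := by
  induction n with
  | zero => rfl
  | succ n ih => exact congrArg (· + 1) ih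

theorem subst_numT (t : FOTerm NatSig) (e : ℕ → ℕ) :
    t.subst (fun i => numT (e i)) = numT (t.eval natFn e) := by
  induction t with
  | var i => rfl
  | fn f ts ih =>
    cases f with
    | zero => exact congrArg (FOTerm.fn (S := NatSig) NatFn.zero) (funext fun i => i.elim0)
    | succ =>
      refine congrArg (FOTerm.fn (S := NatSig) NatFn.succ) (funext fun i => ?_)
      rw [show i = ⟨0, Nat.one_pos⟩ from Subsingleton.elim (α := Fin 1) _ _]
      exact ih _

section Adequate

variable {E : Set (FOTerm NatSig × FOTerm NatSig)}

theorem Adequate.numT_injective (hE : Adequate E) {m n : ℕ} (h : EqE E (numT m) (numT n)) :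
    m = n := by
  induction m generalizing n with
  | zero =>
    cases n with
    | zero => rfl
    | succ n => exact absurd (h.symm _ _) (hE.1 _)
  | succ m ih =>
    cases n with
    | zero => exact absurd h (hE.1 _)
    | succ n => exact congrArg (· + 1) (ih (hE.2 _ _ h))

theorem Adequate.satisfies (hE : Adequate E) : Satisfies natFn E := fun p hp e =>
  hE.numT_injective <| .rel _ _
    ⟨p, hp, fun i => numT (e i), (subst_numT p.1 e).symm, (subst_numT p.2 e).symm⟩

end Adequate

/-! ### Realizability -/

/-- A notion of realizability for second-order logic: `Value` is the type of the semantic values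
of formulas, and a term realizes a value at each stage `w` of a Kripke frame `W`. -/
structure RealizabilityAlgebra (W : Type) [Preorder W] where
  Value : Type
  Realizes : W → LC → Value → Prop
  bot : Value
  arr : Value → Value → Value
  inf {ι : Type} : (ι → Value) → Value
  realizes_mono {w w' : W} {t : LC} {A : Value} : w ≤ w' → Realizes w t A → Realizes w' t A
  realizes_expand {w : W} {t t' : LC} {A : Value} :
    t.HeadBeta t' → Realizes w t' A → Realizes w t A
  realizes_arr {w : W} {t : LC} {A B : Value} :
    Realizes w t (arr A B) ↔ ∀ w', w ≤ w' → ∀ u, Realizes w' u A → Realizes w' (.app t u) B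
  realizes_inf {ι : Type} {w : W} {t : LC} {A : ι → Value} :
    Realizes w t (inf A) ↔ ∀ i, Realizes w t (A i)

/-- The value of `¬A`. -/
abbrev RealizabilityAlgebra.neg {W : Type} [Preorder W] (R : RealizabilityAlgebra W)
    (A : R.Value) : R.Value :=
  R.arr A R.bot

/-- A realizability algebra together with an interpretation of the language `S`: first-order
variables range over `D`, predicate variables over functions from lists of elements of `D` to
values. -/
structure RealizabilityModel (S : Sig) (D W : Type) [Preorder W] extends
    RealizabilityAlgebra W where
  fn : (f : S.Fn) → (Fin (S.arFn f) → D) → D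
  pr : S.Pr → List D → Value

/-- The environment in which the first variables take the values listed in `l` and the following
ones those of `e`. -/
def paramEnv {D : Type} (l : List D) (e : ℕ → D) : ℕ → D :=
  fun i => l.getD i (e (i - l.length))

/-- Insertion of the new entry `a` at position `k` of a sequence. -/
def insertAt {α : Type*} (k : ℕ) (a : α) (f : ℕ → α) : ℕ → α :=
  fun i => if i = k then a else f (if k < i then i - 1 else i)

theorem insertAt_zero {α : Type*} (a : α) (f : ℕ → α) : insertAt 0 a f = scons a f := by
  funext i
  cases i <;> simp [insertAt, scons]

theorem insertAt_succ_scons {α : Type*} (k : ℕ) (a b : α) (f : ℕ → α) :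
    insertAt (k + 1) a (scons b f) = scons b (insertAt k a f) := by
  funext i
  rcases i with _ | _ | i <;> grind [insertAt, scons]

namespace RealizabilityModel

variable {S : Sig} {D W : Type} [Preorder W] (M : RealizabilityModel S D W)

/-- Semantic value of a formula. -/
def interp : Form S → (ℕ → D) → (ℕ → List D → M.Value) → M.Value
  | .bot, _, _ => M.bot
  | .pr P ts, e, _ => M.pr P (ts.map (FOTerm.eval M.fn e))
  | .pvar X ts, e, η => η X (ts.map (FOTerm.eval M.fn e))
  | .arr A B, e, η => M.arr (interp A e η) (interp B e η)
  | .fall A, e, η => M.inf fun d => interp A (scons d e) η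
  | .pall A, e, η => M.inf fun Φ => interp A e (scons Φ η)

theorem interp_substFO (A : Form S) (σ : ℕ → FOTerm S) (e : ℕ → D)
    (η : ℕ → List D → M.Value) :
    M.interp (A.substFO σ) e η = M.interp A (fun i => (σ i).eval M.fn e) η := by
  induction A generalizing σ e η with
  | bot => rfl
  | pr P ts | pvar X ts =>
    simp only [Form.substFO, interp, List.map_map, Function.comp_def, FOTerm.eval_subst]
  | arr A B ihA ihB => simp only [Form.substFO, interp, ihA, ihB]
  | fall A ih =>
    simp only [Form.substFO, interp, ih]
    congr! 3 with d
    funext i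
    cases i with
    | zero => rfl
    | succ i => simp only [FOTerm.liftSub, FOTerm.eval_rename, scons]
  | pall A ih => simp only [Form.substFO, interp, ih]

theorem interp_substFO0 (A : Form S) (u : FOTerm S) (e : ℕ → D) (η : ℕ → List D → M.Value) :
    M.interp (A.substFO0 u) e η = M.interp A (scons (u.eval M.fn e) e) η := by
  rw [Form.substFO0, interp_substFO]
  congr 1
  funext i
  cases i <;> rfl

theorem interp_shiftFO (A : Form S) (d : D) (e : ℕ → D) (η : ℕ → List D → M.Value) :
    M.interp A.shiftFO (scons d e) η = M.interp A e η :=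
  M.interp_substFO A _ _ η

theorem interp_rename2 (A : Form S) (ρ : ℕ → ℕ) (e : ℕ → D) (η : ℕ → List D → M.Value) :
    M.interp (A.rename2 ρ) e η = M.interp A e fun X => η (ρ X) := by
  induction A generalizing ρ e η with
  | bot | pr P ts | pvar X ts => rfl
  | arr A B ihA ihB => simp only [Form.rename2, interp, ihA, ihB]
  | fall A ih => simp only [Form.rename2, interp, ih]
  | pall A ih =>
    simp only [Form.rename2, interp, ih]
    congr! 3 with Φ
    funext X
    cases X <;> rfl

theorem interp_inst2 (G A : Form S) (d k : ℕ) (e : ℕ → D) (η : ℕ → List D → M.Value) :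
    M.interp (Form.inst2 G d k A) e η = M.interp A e (insertAt k
      (fun l => M.interp G (paramEnv l fun i => e (i + d)) fun X => η (X + k)) η) := by
  induction A generalizing d k e η with
  | bot | pr P ts => rfl
  | pvar X ts =>
    by_cases hX : X = k
    · simp only [Form.inst2, interp, insertAt, hX, if_true, interp_substFO, interp_rename2]
      congr 1
      funext i
      by_cases hi : i < ts.length <;> simp [paramEnv, FOTerm.eval, hi]
    · simp only [Form.inst2, interp, insertAt, hX, if_false]
  | arr A B ihA ihB => simp only [Form.inst2, interp, ihA, ihB]
  | fall A ih => simp only [Form.inst2, interp, ih]; rfl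
  | pall A ih => simp only [Form.inst2, interp, ih, insertAt_succ_scons]; rfl

theorem interp_inst2_0 (A G : Form S) (e : ℕ → D) (η : ℕ → List D → M.Value) :
    M.interp (A.inst2_0 G) e η =
      M.interp A e (scons (fun l => M.interp G (paramEnv l e) η) η) := by
  rw [Form.inst2_0, interp_inst2, insertAt_zero]
  rfl

/-- The terms `σ 0, σ 1, …` realize the successive formulas of the context `Γ`. -/
def RealizesContext (w : W) (σ : ℕ → LC) (Γ : List (Form S)) (e : ℕ → D)
    (η : ℕ → List D → M.Value) : Prop :=
  ∀ i A, Γ[i]? = some A → M.Realizes w (σ i) (M.interp A e η)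

namespace RealizesContext

variable {M} {w : W} {σ : ℕ → LC} {Γ : List (Form S)} {e : ℕ → D} {η : ℕ → List D → M.Value}

theorem cons {w' : W} {u : LC} {A : Form S} (h : M.RealizesContext w σ Γ e η) (hw : w ≤ w')
    (hu : M.Realizes w' u (M.interp A e η)) :
    M.RealizesContext w' (scons u σ) (A :: Γ) e η := by
  intro i B hB
  cases i with
  | zero => cases hB; exact hu
  | succ i => exact M.realizes_mono hw (h i B hB)

theorem shiftFO (h : M.RealizesContext w σ Γ e η) (d : D) :
    M.RealizesContext w σ (Γ.map Form.shiftFO) (scons d e) η := by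
  intro i A hA
  obtain ⟨B, hB, rfl⟩ := by simpa only [List.getElem?_map, Option.map_eq_some_iff] using hA
  rw [interp_shiftFO]
  exact h i B hB

theorem rename2 (h : M.RealizesContext w σ Γ e η) (Φ : List D → M.Value) :
    M.RealizesContext w σ (Γ.map (Form.rename2 (· + 1))) e (scons Φ η) := by
  intro i A hA
  obtain ⟨B, hB, rfl⟩ := by simpa only [List.getElem?_map, Option.map_eq_some_iff] using hA
  rw [interp_rename2]
  exact h i B hB

end RealizesContext

theorem realizes_of_typC {E : Set (FOTerm S × FOTerm S)} (hE : Satisfies M.fn E) {cl : Bool}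
    (hC : cl = true → ∀ w A, M.Realizes w .cc (M.arr (M.neg (M.neg A)) A))
    {Γ : List (Form S)} {t : LC} {A : Form S} (h : TypC S E cl Γ t A) {w : W} {σ : ℕ → LC}
    {e : ℕ → D} {η : ℕ → List D → M.Value} (hσ : M.RealizesContext w σ Γ e η) :
    M.Realizes w (t.subst σ) (M.interp A e η) := by
  induction h generalizing w σ e η with
  | ccAx hcl => exact M.realizes_inf.mpr fun Φ => hC hcl w (Φ [])
  | var hA => exact hσ _ _ hA
  | absI _ ih =>
    refine M.realizes_arr.mpr fun w' hw u hu => M.realizes_expand (.beta _ u) ?_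
    rw [LC.liftSub_subst0]
    exact ih (hσ.cons hw hu)
  | appE _ _ ihu ihv => exact M.realizes_arr.mp (ihu hσ) w le_rfl _ (ihv hσ)
  | fallI _ ih => exact M.realizes_inf.mpr fun d => ih (hσ.shiftFO d)
  | fallE u _ ih =>
    rw [interp_substFO0]
    exact M.realizes_inf.mp (ih hσ) _
  | pallI _ ih => exact M.realizes_inf.mpr fun Φ => ih (hσ.rename2 Φ)
  | pallE G _ ih =>
    rw [interp_inst2_0]
    exact M.realizes_inf.mp (ih hσ) _
  | eqE _ huv ih =>
    rw [interp_substFO0, ← hE.eval_eq huv e, ← interp_substFO0]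
    exact ih hσ

theorem realizes_of_typC_nil {E : Set (FOTerm S × FOTerm S)} (hE : Satisfies M.fn E) {cl : Bool}
    (hC : cl = true → ∀ w A, M.Realizes w .cc (M.arr (M.neg (M.neg A)) A))
    {t : LC} {A : Form S} (h : TypC S E cl [] t A) (w : W) (e : ℕ → D)
    (η : ℕ → List D → M.Value) : M.Realizes w t (M.interp A e η) := by
  simpa only [LC.subst_var] using
    M.realizes_of_typC hE hC h (σ := LC.var) fun _ _ hA => nomatch hA

end RealizabilityModel

namespace RealizabilityAlgebra

variable {W : Type} [Preorder W] (R : RealizabilityAlgebra W)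

/-- The model over the realizability algebra `R` whose first-order part is the standard model of
arithmetic. -/
def standardModel : RealizabilityModel NatSig ℕ W where
  toRealizabilityAlgebra := R
  fn := natFn
  pr P := nomatch P

/-- The semantic value of the type of integers `N[n]`. -/
def natValue (n : ℕ) : R.Value :=
  R.inf fun Φ : List ℕ → R.Value =>
    R.arr (Φ [0]) (R.arr (R.inf fun m => R.arr (Φ [m]) (Φ [m + 1])) (Φ [n]))

/-- The semantic value of the Gödel translation `N^g[n]`. -/
def natGodelValue (n : ℕ) : R.Value :=
  R.inf fun Φ : List ℕ → R.Value =>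
    R.arr (R.neg (Φ [0]))
      (R.arr (R.inf fun m => R.arr (R.neg (Φ [m])) (R.neg (Φ [m + 1]))) (R.neg (Φ [n])))

theorem realizes_of_typC_storType {E : Set (FOTerm NatSig × FOTerm NatSig)} (hE : Adequate E)
    {T : LC} (hT : TypC NatSig E false [] T storType) (w : W) (n : ℕ) :
    R.Realizes w T (R.arr (R.natGodelValue n) (R.neg (R.neg (R.natValue n)))) :=
  R.realizes_inf.mp (R.standardModel.realizes_of_typC_nil hE.satisfies (cl := false) nofun hT w
    (fun _ => 0) fun _ _ => R.bot) n

theorem realizes_of_typC_NForm {E : Set (FOTerm NatSig × FOTerm NatSig)} (hE : Adequate E)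
    (hC : ∀ w A, R.Realizes w .cc (R.arr (R.neg (R.neg A)) A)) {n : ℕ} {θ : LC}
    (hθ : TypC NatSig E true [] θ (NForm (numT n))) (w : W) :
    R.Realizes w θ (R.natValue n) := by
  have interp_NForm : R.standardModel.interp (NForm (numT n)) (fun _ => 0) (fun _ _ => R.bot) =
      R.natValue n := by
    have eval_n : (numT n).eval R.standardModel.fn (fun _ => 0) = n := eval_numT n _
    simp only [NForm, RealizabilityModel.interp, List.map, eval_n]
    rfl
  rw [← interp_NForm]
  exact R.standardModel.realizes_of_typC_nil hE.satisfies (fun _ => hC) hθ w _ _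

end RealizabilityAlgebra

/-! ### Kripke models of saturated sets -/

/-- A family of sets of terms, increasing along the Kripke frame `W` and closed under weak head
β-expansion. -/
structure SaturatedSet (W : Type) [Preorder W] where
  Mem : W → LC → Prop
  mono {w w' : W} {t : LC} : w ≤ w' → Mem w t → Mem w' t
  expand {w : W} {t t' : LC} : t.HeadBeta t' → Mem w t' → Mem w t

section Saturated

variable {W : Type} [Preorder W]

/-- The realizability algebra of saturated sets, with a given interpretation of `⊥`. -/
def saturatedAlgebra (bot : SaturatedSet W) : RealizabilityAlgebra W where
  Value := SaturatedSet W
  Realizes w t A := A.Mem w t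
  bot := bot
  arr A B :=
    { Mem w t := ∀ w', w ≤ w' → ∀ u, A.Mem w' u → B.Mem w' (.app t u)
      mono hw ht w' hw' := ht w' (hw.trans hw')
      expand h ht w' hw u hu := B.expand (.appL u h) (ht w' hw u hu) }
  inf A :=
    { Mem w t := ∀ i, (A i).Mem w t
      mono hw ht i := (A i).mono hw (ht i)
      expand h ht i := (A i).expand h (ht i) }
  realizes_mono {_ _ _ A} := A.mono
  realizes_expand {_ _ _ A} := A.expand
  realizes_arr := Iff.rfl
  realizes_inf := Iff.rfl

/-- The set of terms that reduce to `u`. -/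
def SaturatedSet.reducingTo (u : LC) : SaturatedSet W where
  Mem _ t := t.BetaRed u
  mono _ h := h
  expand h h' := .head h.toBeta h'

/-- Instantiate the predicate variable at `m` by the terms that reduce to the `m`-th iterate of a
fresh variable. -/
theorem betaRed_church_of_realizes_natValue {bot : SaturatedSet W} {w : W} {k n : ℕ} {t : LC}
    (ht : t.PureUnder k)
    (h : (saturatedAlgebra bot).Realizes w t ((saturatedAlgebra bot).natValue n)) :
    t.BetaRed (.church n) := by
  let Φ (l : List ℕ) : SaturatedSet W :=
    .reducingTo (.iterApp (.var (k + 1)) (l.headD 0) (.var k))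
  have zero_mem : (Φ [0]).Mem w (.var k) := .refl
  have succ_mem : ∀ m w', w ≤ w' → ∀ u, (Φ [m]).Mem w' u →
      (Φ [m + 1]).Mem w' (.app (.var (k + 1)) u) := fun m w' _ u hu => hu.appR _
  exact LC.BetaRed.church_of_iterApp ht (h Φ w le_rfl _ zero_mem w le_rfl _ succ_mem)

end Saturated

/-! ### Krivine models -/

namespace LC

/-- Sets of terms closed under head C-expansion, which serve as poles of Krivine models. -/
def ExpansionClosed (pole : LC → Prop) : Prop := ∀ ⦃u v⦄, HCStep u v → pole v → pole u

end LC

section Krivine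

variable {pole : LC → Prop}

/-- The Krivine algebra of a pole: the value of a formula is its falsity value, a set of stacks,
and `t` realizes it when `t` followed by any of these stacks is in the pole. -/
def krivineAlgebra (hpole : LC.ExpansionClosed pole) : RealizabilityAlgebra Unit where
  Value := Set (List LC)
  Realizes _ t P := ∀ π ∈ P, pole (t.appSpine π)
  bot := {[]}
  arr A B := {π | ∃ u π', (∀ ρ ∈ A, pole (u.appSpine ρ)) ∧ π' ∈ B ∧ π = u :: π'}
  inf A := ⋃ i, A i
  realizes_mono _ h := h
  realizes_expand h ht π hπ := hpole (h.hcStep_appSpine π) (ht π hπ)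
  realizes_arr :=
    ⟨fun h _ _ u hu π hπ => h _ ⟨u, π, hu, hπ, rfl⟩, by
      rintro h _ ⟨u, π, hu, hπ, rfl⟩
      exact h () le_rfl u hu π hπ⟩
  realizes_inf := by
    intro ι _ t A
    simp only [Set.mem_iUnion]
    exact ⟨fun h i π hπ => h π ⟨i, hπ⟩, fun h π ⟨i, hπ⟩ => h i π hπ⟩

theorem krivineAlgebra_realizes_cc (hpole : LC.ExpansionClosed pole) (w : Unit)
    (A : (krivineAlgebra hpole).Value) :
    (krivineAlgebra hpole).Realizes w .cc ((krivineAlgebra hpole).arr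
      ((krivineAlgebra hpole).neg ((krivineAlgebra hpole).neg A)) A) := by
  rintro _ ⟨t, π, ht, hπ, rfl⟩
  refine hpole (.cred t π) (ht [_] ⟨_, [], ?_, rfl, rfl⟩)
  rintro _ ⟨u, _, hu, rfl, rfl⟩
  have step : LC.HCStep (.app (.abs (.appSpine (.var 0) (π.map (LC.rename (· + 1))))) u)
      (u.appSpine π) := by
    have subst_eq : (LC.appSpine (.var 0) (π.map (LC.rename (· + 1)))).subst0 u =
        u.appSpine π := by
      simp [LC.subst0_eq_subst, LC.appSpine_subst, LC.rename_subst, Function.comp_def, scons,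
        LC.subst, LC.subst_var]
    exact subst_eq ▸ .beta _ u []
  exact hpole step (hu π hπ)

/-- `P m` is used as the set of arguments that falsify the predicate variable at `m`. -/
theorem pole_of_typC_NForm (hpole : LC.ExpansionClosed pole)
    {E : Set (FOTerm NatSig × FOTerm NatSig)} (hE : Adequate E) {n : ℕ} {θ : LC}
    (hθ : TypC NatSig E true [] θ (NForm (numT n))) (P : ℕ → Set LC) {a b c : LC}
    (ha : ∀ e ∈ P 0, pole (.app a e))
    (hb : ∀ m t, (∀ e ∈ P m, pole (.app t e)) → ∀ e ∈ P (m + 1), pole (.app (.app b t) e))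
    (hc : c ∈ P n) : pole (.app (.app (.app θ a) b) c) := by
  set R := krivineAlgebra hpole
  let Φ (l : List ℕ) : R.Value := (fun e => [e]) '' P (l.headD 0)
  have realizes_Φ {t : LC} {m : ℕ} :
      R.Realizes () t (Φ [m]) ↔ ∀ e ∈ P m, pole (.app t e) := Set.forall_mem_image
  have zero_realizes : R.Realizes () a (Φ [0]) := realizes_Φ.mpr ha
  have succ_realizes : R.Realizes () b (R.inf fun m => R.arr (Φ [m]) (Φ [m + 1])) :=
    R.realizes_inf.mpr fun m => R.realizes_arr.mpr fun _ _ t ht =>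
      realizes_Φ.mpr (hb m t (realizes_Φ.mp ht))
  have θ_realizes : R.Realizes () θ (R.natValue n) :=
    R.realizes_of_typC_NForm hE (krivineAlgebra_realizes_cc hpole) hθ ()
  have applied := R.realizes_arr.mp (R.realizes_inf.mp θ_realizes Φ) () le_rfl a zero_realizes
  exact realizes_Φ.mp (R.realizes_arr.mp applied () le_rfl b succ_realizes) c hc

end Krivine

/-! ### Symbolic execution of a storage operator

The variable `0` is `f`, the variable `1` is the unknown integer `ν`, and the variable `k + 2`
is the `k`-th entry of the current trace. -/

/-- The suspended iteration `λd. (m̲) base step d` with `m = count`. -/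
structure Iteration where
  base : LC
  step : LC
  count : ℕ

/-- The iterations that have been suspended so far, the oldest first. -/
abbrev Trace := List Iteration

instance : Preorder Trace where
  le := (· <+: ·)
  le_refl := List.prefix_refl
  le_trans _ _ _ := List.IsPrefix.trans

namespace Iteration

/-- One step in the computation of `r` applied to `d`: for a successor, the step is applied to the
predecessor iteration, suspended as a new trace entry. -/
def unroll (ρ : Trace) (d : LC) : Iteration → Trace × LC
  | ⟨a, _, 0⟩ => (ρ, .app a d)
  | ⟨a, b, m + 1⟩ => (ρ ++ [⟨a, b, m⟩], .app (.app b (.var (ρ.length + 2))) d)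

/-- The terms of the iteration are pure and have their free variables among the first `k`. -/
def Scoped (k : ℕ) (r : Iteration) : Prop := r.base.PureUnder k ∧ r.step.PureUnder k

theorem Scoped.mono {k l : ℕ} (hkl : k ≤ l) {r : Iteration} (hr : r.Scoped k) : r.Scoped l :=
  ⟨hr.1.mono hkl, hr.2.mono hkl⟩

/-- Substitution in both terms of an iteration. -/
def subst (σ : ℕ → LC) (r : Iteration) : Iteration :=
  ⟨r.base.subst σ, r.step.subst σ, r.count⟩

theorem Scoped.subst_congr {k : ℕ} {σ σ' : ℕ → LC} {r : Iteration} (hr : r.Scoped k)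
    (h : ∀ i < k, σ i = σ' i) : r.subst σ = r.subst σ' := by
  simp only [subst, LC.subst_congr hr.1.closedUnder h, LC.subst_congr hr.2.closedUnder h]

end Iteration

/-- `Run n τ L (ρ, s)`: with `ν` behaving as `n̲`, the execution of `s` in the trace `ρ` ends on
`(f)τ` after `L` steps. -/
inductive Run (n : ℕ) (τ : LC) : ℕ → Trace × LC → Prop
  | done {ρ : Trace} : Run n τ 0 (ρ, .app (.var 0) τ)
  | beta {L : ℕ} {ρ : Trace} {s s' : LC} : s.HeadBeta s' → Run n τ L (ρ, s') →
      Run n τ (L + 1) (ρ, s)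
  | query {L : ℕ} {ρ : Trace} {a b c : LC} : Run n τ L (Iteration.unroll ρ c ⟨a, b, n⟩) →
      Run n τ (L + 1) (ρ, .app (.app (.app (.var 1) a) b) c)
  | call {L k : ℕ} {ρ : Trace} {r : Iteration} {d : LC} : ρ[k]? = some r →
      Run n τ L (r.unroll ρ d) → Run n τ (L + 1) (ρ, .app (.var (k + 2)) d)

/-- The execution ends on `(f)τ` for some pure term `τ` that reduces to `n̲`. -/
def Converges (n : ℕ) (st : Trace × LC) : Prop :=
  ∃ τ : LC, τ.Pure ∧ τ.BetaRed (.church n) ∧ ∃ L, Run n τ L st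

theorem Converges.of_run {n : ℕ} {st st' : Trace × LC} (h : Converges n st')
    (step : ∀ τ L, Run n τ L st' → Run n τ (L + 1) st) : Converges n st :=
  let ⟨τ, hτ, hred, L, run⟩ := h
  ⟨τ, hτ, hred, L + 1, step τ L run⟩

/-- The interpretation of `⊥`: the terms that converge in every extension of the trace to which
their variables belong. -/
def convergentSet (n : ℕ) : SaturatedSet Trace where
  Mem ρ s := ∀ ρ', ρ ≤ ρ' → s.PureUnder (ρ'.length + 2) → Converges n (ρ', s)
  mono hρ hs ρ' hρ' := hs ρ' (hρ.trans hρ')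
  expand h ht ρ' hρ' hs :=
    (ht ρ' hρ' (hs.beta h.toBeta)).of_run fun _ _ => .beta h

/-- The realizability algebra in which storage operators are executed symbolically. -/
abbrev symbolicAlgebra (n : ℕ) : RealizabilityAlgebra Trace := saturatedAlgebra (convergentSet n)

theorem symbolicAlgebra_realizes_neg {n : ℕ} {ρ : Trace} {t : LC} {A : SaturatedSet Trace} :
    (symbolicAlgebra n).Realizes ρ t ((symbolicAlgebra n).neg A) ↔
      ∀ ρ', ρ ≤ ρ' → ∀ u, A.Mem ρ' u → (LC.app t u).PureUnder (ρ'.length + 2) →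
        Converges n (ρ', .app t u) :=
  ⟨fun h ρ' hρ' u hu hs => h ρ' hρ' u hu ρ' le_rfl hs,
    fun h _ hρ₁ u hu ρ₂ hρ₂ hs => h ρ₂ (hρ₁.trans hρ₂) u (A.mono hρ₂ hu) hs⟩

theorem converges_unroll {n : ℕ} {Φ : List ℕ → SaturatedSet Trace} {ρ : Trace} {a b d : LC}
    {m : ℕ} (ha : (symbolicAlgebra n).Realizes ρ a ((symbolicAlgebra n).neg (Φ [0])))
    (hb : ∀ i, (symbolicAlgebra n).Realizes ρ b ((symbolicAlgebra n).arr
      ((symbolicAlgebra n).neg (Φ [i])) ((symbolicAlgebra n).neg (Φ [i + 1]))))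
    (hd : (Φ [m]).Mem ρ d) (hab : Iteration.Scoped (ρ.length + 2) ⟨a, b, m⟩)
    (hd' : d.PureUnder (ρ.length + 2)) : Converges n (Iteration.unroll ρ d ⟨a, b, m⟩) := by
  induction m generalizing ρ d with
  | zero => exact symbolicAlgebra_realizes_neg.mp ha ρ le_rfl d hd ⟨hab.1, hd'⟩
  | succ m ih =>
    set ρ₁ : Trace := ρ ++ [⟨a, b, m⟩] with hρ₁
    have ρ_le : ρ ≤ ρ₁ := List.prefix_append _ _
    have length_ρ₁ : ρ₁.length = ρ.length + 1 := by simp [hρ₁]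
    have length_le : ρ.length + 2 ≤ ρ₁.length + 2 := by omega
    have pred_realizes : (symbolicAlgebra n).Realizes ρ₁ (.var (ρ.length + 2))
        ((symbolicAlgebra n).neg (Φ [m])) := by
      refine symbolicAlgebra_realizes_neg.mpr fun ρ₂ h₁₂ e he hs => ?_
      have h₀₂ : ρ ≤ ρ₂ := ρ_le.trans h₁₂
      have lookup : ρ₂[ρ.length]? = some ⟨a, b, m⟩ :=
        (List.prefix_iff_getElem?.mp h₁₂ ρ.length (by omega)).trans (by simp [hρ₁])
      have e_converges : Converges n (Iteration.unroll ρ₂ e ⟨a, b, m⟩) :=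
        ih ((symbolicAlgebra n).realizes_mono h₀₂ ha)
          (fun i => (symbolicAlgebra n).realizes_mono h₀₂ (hb i)) he
          (hab.mono (Nat.add_le_add_right h₀₂.length_le 2)) hs.2
      exact e_converges.of_run fun _ _ => .call lookup
    exact symbolicAlgebra_realizes_neg.mp (hb m ρ₁ ρ_le _ pred_realizes) ρ₁ le_rfl d
      ((Φ [m + 1]).mono ρ_le hd)
      ⟨⟨hab.2.mono length_le, show ρ.length + 2 < ρ₁.length + 2 by omega⟩, hd'.mono length_le⟩

theorem unknown_realizes_natGodelValue (n : ℕ) (ρ : Trace) :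
    (symbolicAlgebra n).Realizes ρ (.var 1) ((symbolicAlgebra n).natGodelValue n) := by
  intro Φ ρ₁ _ a ha ρ₂ h₁₂ b hb
  refine symbolicAlgebra_realizes_neg.mpr fun ρ₃ h₂₃ c hc ⟨⟨⟨_, ha'⟩, hb'⟩, hc'⟩ => ?_
  have c_converges : Converges n (Iteration.unroll ρ₃ c ⟨a, b, n⟩) :=
    converges_unroll ((symbolicAlgebra n).realizes_mono (h₁₂.trans h₂₃) ha)
      (fun i => (symbolicAlgebra n).realizes_mono h₂₃ (hb i)) hc ⟨ha', hb'⟩ hc'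
  exact c_converges.of_run fun _ _ => .query

theorem continuation_realizes_neg_natValue (n : ℕ) (ρ : Trace) :
    (symbolicAlgebra n).Realizes ρ (.var 0)
      ((symbolicAlgebra n).neg ((symbolicAlgebra n).natValue n)) :=
  symbolicAlgebra_realizes_neg.mpr fun _ _ τ hτ ⟨_, hs⟩ =>
    ⟨τ, hs.pure, betaRed_church_of_realizes_natValue hs hτ, 0, .done⟩

theorem converges_of_typC_storType {E : Set (FOTerm NatSig × FOTerm NatSig)} (hE : Adequate E)
    {T : LC} (hT : TypC NatSig E false [] T storType) (n : ℕ) :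
    Converges n ([], .app (.app T (.var 1)) (.var 0)) := by
  have T_realizes := (symbolicAlgebra n).realizes_of_typC_storType hE hT [] n
  have Tν_realizes := T_realizes [] le_rfl _ (unknown_realizes_natGodelValue n [])
  exact symbolicAlgebra_realizes_neg.mp Tν_realizes [] le_rfl _
    (continuation_realizes_neg_natValue n [])
    ⟨⟨hT.pureUnder.mono (Nat.zero_le 2), Nat.one_lt_two⟩, Nat.two_pos⟩

/-! ### Simulation by a classical integer -/

section Simulation

open LC

variable {n : ℕ} {τ θ : LC}

/-- The reduction of `u` ends on an instance `(f)σ(τ)` of the result of the symbolic run. -/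
def Answers (τ u : LC) : Prop :=
  ∃ σ : ℕ → LC, σ 0 = var 0 ∧ HCRed u (app (var 0) (τ.subst σ))

theorem expansionClosed_answers (τ : LC) : ExpansionClosed (Answers τ) :=
  fun _ _ step ⟨σ, hσ, red⟩ => ⟨σ, hσ, red.head step⟩

/-- The entries of the trace only use `f`, `ν` and entries of the trace. -/
def Trace.Scoped (ρ : Trace) : Prop := ∀ r ∈ ρ, r.Scoped (ρ.length + 2)

theorem Trace.Scoped.concat {ρ : Trace} {r : Iteration} (hρ : ρ.Scoped)
    (hr : r.Scoped (ρ.length + 2)) : Trace.Scoped (ρ ++ [r]) := by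
  intro r' hr'
  have length_le : ρ.length + 2 ≤ (ρ ++ [r]).length + 2 := by simp
  rcases List.mem_append.mp hr' with h | h
  · exact (hρ r' h).mono length_le
  · exact List.mem_singleton.mp h ▸ hr.mono length_le

/-- The substitution `σ` gives actual values to the variables of a symbolic run: `θ` to `ν`, and
to each trace entry a term that is `good` as an implementation of the suspended iteration. -/
structure Implements (good : Iteration → LC → Prop) (θ : LC) (ρ : Trace) (σ : ℕ → LC) :
    Prop where
  continuation : σ 0 = var 0
  integer : σ 1 = θ
  entry {k : ℕ} {r : Iteration} : ρ[k]? = some r → good (r.subst σ) (σ (k + 2))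

theorem Implements.imp {good good' : Iteration → LC → Prop} {ρ : Trace} {σ : ℕ → LC}
    (h : Implements good θ ρ σ) (himp : ∀ R t, good R t → good' R t) :
    Implements good' θ ρ σ :=
  ⟨h.continuation, h.integer, fun hk => himp _ _ (h.entry hk)⟩

theorem Implements.concat {good : Iteration → LC → Prop} {ρ : Trace} {σ : ℕ → LC} {r : Iteration}
    {t : LC} (h : Implements good θ ρ σ) (hρ : ρ.Scoped) (hr : r.Scoped (ρ.length + 2))
    (ht : good (r.subst σ) t) :
    Implements good θ (ρ ++ [r]) (Function.update σ (ρ.length + 2) t) := by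
  have agree : ∀ i < ρ.length + 2, σ i = Function.update σ (ρ.length + 2) t i :=
    fun i hi => (Function.update_of_ne hi.ne t σ).symm
  refine ⟨?_, ?_, fun {k r'} hk => ?_⟩
  · rw [← agree 0 (by omega), h.continuation]
  · rw [← agree 1 (by omega), h.integer]
  · rcases lt_or_ge k ρ.length with hlt | hge
    · rw [List.getElem?_append_left hlt] at hk
      rw [← (hρ r' (List.mem_of_getElem? hk)).subst_congr agree,
        ← agree (k + 2) (Nat.add_lt_add_right hlt 2)]
      exact h.entry hk
    · have k_eq : k = ρ.length := by
        have := (List.getElem?_eq_some_iff.mp hk).1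
        simp only [List.length_append, List.length_singleton] at this
        omega
      subst k_eq
      obtain rfl : r = r' := by simpa using hk
      rwa [← hr.subst_congr agree, Function.update_self]

/-- `Test n τ θ good L R e`: the pair `(R, e)` is an instance of an iteration and an argument from
which the symbolic run ends after `L` steps. -/
def Test (n : ℕ) (τ θ : LC) (good : Iteration → LC → Prop) (L : ℕ) (R : Iteration) (e : LC) :
    Prop :=
  ∃ (ρ : Trace) (r : Iteration) (d : LC) (σ : ℕ → LC),
    (ρ.Scoped ∧ r.Scoped (ρ.length + 2) ∧ d.PureUnder (ρ.length + 2)) ∧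
    Run n τ L (r.unroll ρ d) ∧ Implements good θ ρ σ ∧ r.subst σ = R ∧ d.subst σ = e

/-- The term `t` implements the iteration `R` as far as runs of less than `L` steps can tell. -/
def Good (n : ℕ) (τ θ : LC) (L : ℕ) (R : Iteration) (t : LC) : Prop :=
  ∀ L', (h : L' < L) → ∀ e, Test n τ θ (Good n τ θ L') L' R e → Answers τ (app t e)
termination_by L

theorem good_iff {L : ℕ} {R : Iteration} {t : LC} : Good n τ θ L R t ↔
    ∀ L' < L, ∀ e, Test n τ θ (Good n τ θ L') L' R e → Answers τ (app t e) := by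
  rw [Good]

theorem Good.mono {L L' : ℕ} (hL : L ≤ L') {R : Iteration} {t : LC} (h : Good n τ θ L' R t) :
    Good n τ θ L R t :=
  good_iff.mpr fun l hl => good_iff.mp h l (hl.trans_le hL)

/-- Every symbolic run of `L` steps can be replayed with actual values. -/
def Replayable (n : ℕ) (τ θ : LC) (L : ℕ) : Prop :=
  ∀ ⦃ρ s σ⦄, Run n τ L (ρ, s) → ρ.Scoped → s.PureUnder (ρ.length + 2) →
    Implements (Good n τ θ L) θ ρ σ → Answers τ (s.subst σ)

theorem Replayable.answers_base {L : ℕ} (hL : Replayable n τ θ L) {A B e : LC}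
    (he : Test n τ θ (Good n τ θ L) L ⟨A, B, 0⟩ e) : Answers τ (app A e) := by
  obtain ⟨ρ, ⟨a, b, m⟩, d, σ, ⟨hρ, hr, hd⟩, run, hσ, hR, rfl⟩ := he
  cases hR
  exact hL (s := app a d) run hρ ⟨hr.1, hd⟩ hσ

theorem Replayable.answers_step {L m : ℕ} (hL : Replayable n τ θ L) {A B e t : LC}
    (ht : Good n τ θ L ⟨A, B, m⟩ t)
    (he : Test n τ θ (Good n τ θ L) L ⟨A, B, m + 1⟩ e) : Answers τ (app (app B t) e) := by
  obtain ⟨ρ, ⟨a, b, m⟩, d, σ, ⟨hρ, hr, hd⟩, run, hσ, hR, rfl⟩ := he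
  cases hR
  have hσ' : Implements (Good n τ θ L) θ (ρ ++ [⟨a, b, m⟩])
      (Function.update σ (ρ.length + 2) t) := hσ.concat hρ hr ht
  have agree : ∀ i < ρ.length + 2, Function.update σ (ρ.length + 2) t i = σ i :=
    fun i hi => Function.update_of_ne hi.ne t σ
  have hs : (app (app b (var (ρ.length + 2))) d).PureUnder
      ((ρ ++ [(⟨a, b, m⟩ : Iteration)]).length + 2) := by
    rw [List.length_append]
    exact ⟨⟨hr.2.mono (Nat.le_succ _), Nat.lt_succ_self _⟩, hd.mono (Nat.le_succ _)⟩
  have answers := hL run (hρ.concat hr) hs hσ'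
  simpa only [LC.subst, LC.subst_congr hr.2.closedUnder agree,
    LC.subst_congr hd.closedUnder agree, Function.update_self] using answers

theorem replayable {E : Set (FOTerm NatSig × FOTerm NatSig)} (hE : Adequate E)
    (hθ : TypC NatSig E true [] θ (NForm (numT n))) (L : ℕ) : Replayable n τ θ L := by
  induction L using Nat.strong_induction_on with
  | _ L ih =>
  intro ρ s σ run hρ hs hσ
  cases run with
  | done => exact ⟨σ, hσ.continuation, by rw [LC.subst, LC.subst, hσ.continuation]; exact .refl⟩
  | @beta L _ _ s' step run =>
    refine expansionClosed_answers τ (HCStep.subst (step.hcStep_appSpine []) σ) ?_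
    exact ih L L.lt_succ_self run hρ (hs.beta step.toBeta)
      (hσ.imp fun _ _ => Good.mono L.le_succ)
  | @query L _ a b c run =>
    obtain ⟨⟨⟨_, ha⟩, hb⟩, hc⟩ := hs
    let P (m : ℕ) : Set LC :=
      {e | ∃ L' ≤ L, Test n τ θ (Good n τ θ L') L' ⟨a.subst σ, b.subst σ, m⟩ e}
    simp only [LC.subst, hσ.integer]
    refine pole_of_typC_NForm (expansionClosed_answers τ) hE hθ P ?_ ?_ ?_
    · rintro e ⟨L', hL', he⟩
      exact (ih L' (Nat.lt_succ_of_le hL')).answers_base he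
    · rintro m t ht e ⟨L', hL', he⟩
      have t_good : Good n τ θ L' ⟨a.subst σ, b.subst σ, m⟩ t :=
        good_iff.mpr fun l hl e he => ht e ⟨l, hl.le.trans hL', he⟩
      exact (ih L' (Nat.lt_succ_of_le hL')).answers_step t_good he
    · exact ⟨L, le_rfl, ρ, ⟨a, b, n⟩, c, σ, ⟨hρ, ⟨ha, hb⟩, hc⟩, run,
        hσ.imp fun _ _ => Good.mono L.le_succ, rfl, rfl⟩
  | @call L k _ r d hk run =>
    exact good_iff.mp (hσ.entry hk) L L.lt_succ_self _
      ⟨ρ, r, d, σ, ⟨hρ, hρ r (List.mem_of_getElem? hk), hs.2⟩, run,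
        hσ.imp fun _ _ => Good.mono L.le_succ, rfl, rfl⟩

end Simulation

open LC in
/-- Krivine's storage theorem for classical integers : if
`⊢_AF2 T : ∀x{N^g[x] → ¬¬N[x]}`, then for every `n` there is a λ-term
`τₙ ≃β n̲` such that for every classical integer `θₙ` of value `n` there is
a substitution `σ` with `(T)θₙf ≻_C (f)σ(τₙ)`
(and then `(T)θₙλx.x ≻_C σ′(τₙ) →β n̲`). -/
theorem stmt15 (E : Set (FOTerm NatSig × FOTerm NatSig)) (hE : Adequate E)
    (T : LC) (hT : TypC NatSig E false [] T storType) :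
    ∀ n : ℕ, ∃ τ : LC, Pure τ ∧ BetaEq τ (church n) ∧
      ∀ θ : LC, Closed θ → TypC NatSig E true [] θ (NForm (numT n)) →
        ∃ σ : ℕ → LC, σ 0 = var 0 ∧
          HCRed (app (app T θ) (var 0)) (app (var 0) (τ.subst σ)) ∧
          ∃ σ' : ℕ → LC,
            HCRed (app (app T θ) (abs (var 0))) (τ.subst σ') ∧
            Relation.ReflTransGen Beta (τ.subst σ') (church n) := by
  intro n
  obtain ⟨τ, τ_pure, τ_red, L, run⟩ := converges_of_typC_storType hE hT n
  refine ⟨τ, τ_pure, τ_red.betaEq, fun θ θ_closed hθ => ?_⟩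
  have T_pure : T.PureUnder 0 := hT.pureUnder
  obtain ⟨σ, hσ, red⟩ : Answers τ (app (app T θ) (var 0)) := by
    simpa only [LC.subst, subst_of_closed T_pure.closedUnder, scons] using
      replayable hE hθ L (σ := scons (var 0) (scons θ var)) run nofun
        ⟨⟨T_pure.mono (Nat.zero_le 2), Nat.one_lt_two⟩, Nat.two_pos⟩ ⟨rfl, rfl, nofun⟩
  let ι : ℕ → LC := scons (abs (var 0)) fun i => var (i + 1)
  refine ⟨σ, hσ, red, fun i => (σ i).subst ι, ?_, ?_⟩
  · have red_ι := red.subst ι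
    simp only [LC.subst, subst_of_closed T_pure.closedUnder, subst_of_closed θ_closed,
      subst_subst] at red_ι
    exact red_ι.tail (.beta (var 0) _ [])
  · simpa only [subst_of_closed (church_closed n)] using τ_red.subst fun i => (σ i).subst ι
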